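/- Let m ≥ 3 be an integer, let j be an integer with 1 ≤ j ≤ (m+1)/2, let c_1, …, c_j ∈ ℂ, and set b = c_1 + ⋯ + c_j. Define g(τ) = Σ_{k=1}^{j} c_k · τ^{mk−j} / (τ^m + 1)^{k − 1/2} for τ > 0 (real positive powers of the positive real number τ^m+1). Then g(τ) − b·τ^{m/2 − j} = O(τ^{−m/2 − j}) as τ → +∞, and the function τ ↦ g(τ) − b·τ^{m/2 − j} is integrable on (0, ∞). -/

import Mathlib

open Complex Real Filter Set MeasureTheory Asymptotics

/-!
With `p = k - 1/2` and `r = m/2 - j`, the coefficient of `c_k` in `g` is `τ ^ r * x ^ p`, where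
`x = τ ^ m / (τ ^ m + 1)`. By Bernoulli's inequality `0 ≤ 1 - x ^ p ≤ max 1 p * (1 - x)`, and
`1 - x = 1 / (τ ^ m + 1)`, so every coefficient differs from `τ ^ r` by at most a constant times
`τ ^ r / (τ ^ m + 1)`. This single majorant is at most `τ ^ (r - m)`, and it is integrable on
`(0, ∞)` as soon as `-1 < r < m - 1`.
-/

lemma one_sub_rpow_le_max_mul_one_sub {x : ℝ} (p : ℝ) (hx0 : 0 < x) (hx1 : x ≤ 1) :
    1 - x ^ p ≤ max 1 p * (1 - x) := by
  have bernoulli : 1 + max 1 p * (x - 1) ≤ x ^ max 1 p := by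
    simpa using one_add_mul_self_le_rpow_one_add (s := x - 1) (by linarith) (le_max_left 1 p)
  have antitone : x ^ max 1 p ≤ x ^ p :=
    rpow_le_rpow_of_exponent_ge hx0 hx1 (le_max_right 1 p)
  linarith

lemma abs_rpow_sub_one_le_max_mul_one_sub {x p : ℝ} (hp : 0 ≤ p) (hx0 : 0 < x) (hx1 : x ≤ 1) :
    |x ^ p - 1| ≤ max 1 p * (1 - x) := by
  rw [abs_sub_comm, abs_of_nonneg (sub_nonneg.2 (rpow_le_one hx0.le hx1 hp))]
  exact one_sub_rpow_le_max_mul_one_sub p hx0 hx1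

section Scalar

variable {m r p τ : ℝ}

lemma rpow_mul_add_div_rpow_add_one_rpow (m r p : ℝ) (hτ : 0 < τ) :
    τ ^ (m * p + r) / (τ ^ m + 1) ^ p = τ ^ r * (τ ^ m / (τ ^ m + 1)) ^ p := by
  rw [div_rpow (by positivity) (by positivity), ← rpow_mul hτ.le, rpow_add hτ]
  ring

lemma abs_rpow_mul_add_div_sub_rpow_le (m r : ℝ) (hp : 0 ≤ p) (hτ : 0 < τ) :
    |τ ^ (m * p + r) / (τ ^ m + 1) ^ p - τ ^ r| ≤ max 1 p * (τ ^ r / (τ ^ m + 1)) := by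
  have hr : 0 < τ ^ r := rpow_pos_of_pos hτ r
  set x := τ ^ m / (τ ^ m + 1) with hx
  have hx0 : 0 < x := by positivity
  have hx1 : x ≤ 1 := div_le_one_of_le₀ (by linarith) (by positivity)
  have one_sub_x : 1 - x = 1 / (τ ^ m + 1) := by rw [hx]; field_simp; ring
  calc |τ ^ (m * p + r) / (τ ^ m + 1) ^ p - τ ^ r|
      = τ ^ r * |x ^ p - 1| := by
        rw [rpow_mul_add_div_rpow_add_one_rpow m r p hτ, ← mul_sub_one, abs_mul, abs_of_pos hr]
    _ ≤ τ ^ r * (max 1 p * (1 - x)) := by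
        gcongr
        exact abs_rpow_sub_one_le_max_mul_one_sub hp hx0 hx1
    _ = max 1 p * (τ ^ r / (τ ^ m + 1)) := by rw [one_sub_x]; ring

lemma inv_rpow_add_one_le_rpow_neg (m : ℝ) (hτ : 0 < τ) : (τ ^ m + 1)⁻¹ ≤ τ ^ (-m) := by
  rw [rpow_neg hτ.le]
  exact inv_anti₀ (rpow_pos_of_pos hτ m) (by linarith)

lemma isBigO_inv_rpow_add_one_atTop (m : ℝ) :
    (fun τ : ℝ => (τ ^ m + 1)⁻¹) =O[atTop] (fun τ => τ ^ (-m)) := by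
  refine .of_norm_eventuallyLE ?_
  filter_upwards [eventually_gt_atTop 0] with τ hτ
  rw [norm_of_nonneg (by positivity)]
  exact inv_rpow_add_one_le_rpow_neg m hτ

lemma isBigO_inv_rpow_add_one_nhdsGT_zero (m : ℝ) :
    (fun τ : ℝ => (τ ^ m + 1)⁻¹) =O[nhdsWithin 0 (Ioi 0)] (fun _ => (1 : ℝ)) := by
  refine .of_norm_eventuallyLE ?_
  filter_upwards [self_mem_nhdsWithin] with τ hτ
  have hm : 0 < τ ^ m := rpow_pos_of_pos hτ m
  rw [norm_of_nonneg (by positivity)]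
  exact inv_le_one_of_one_le₀ (by linarith)

lemma integrableOn_Ioi_rpow_div_rpow_add_one (hr : -1 < r) (hrm : r + 1 < m) :
    IntegrableOn (fun τ : ℝ => τ ^ r / (τ ^ m + 1)) (Ioi 0) := by
  have hcont : ContinuousOn (fun τ : ℝ => (τ ^ m + 1)⁻¹) (Ioi 0) := fun τ (hτ : 0 < τ) =>
    ((continuousAt_rpow_const τ m (.inl hτ.ne')).add_const 1 |>.inv₀
      (by positivity)).continuousWithinAt
  have hzero : (fun τ : ℝ => (τ ^ m + 1)⁻¹) =O[nhdsWithin 0 (Ioi 0)] (fun τ => τ ^ (-0 : ℝ)) := by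
    simpa only [neg_zero, rpow_zero] using isBigO_inv_rpow_add_one_nhdsGT_zero m
  simpa only [add_sub_cancel_right, ← div_eq_mul_inv] using
    mellin_convergent_of_isBigO_scalar (hcont.locallyIntegrableOn measurableSet_Ioi)
      (isBigO_inv_rpow_add_one_atTop m) hrm hzero (by linarith : 0 < r + 1)

lemma isBigO_rpow_mul_add_div_sub_rpow (m r : ℝ) (hp : 0 ≤ p) :
    (fun τ : ℝ => τ ^ (m * p + r) / (τ ^ m + 1) ^ p - τ ^ r) =O[atTop]
      (fun τ => τ ^ (r - m)) := by
  refine .of_bound (max 1 p) ?_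
  filter_upwards [eventually_gt_atTop 0] with τ hτ
  calc |τ ^ (m * p + r) / (τ ^ m + 1) ^ p - τ ^ r|
      ≤ max 1 p * (τ ^ r * (τ ^ m + 1)⁻¹) := abs_rpow_mul_add_div_sub_rpow_le m r hp hτ
    _ ≤ max 1 p * (τ ^ r * τ ^ (-m)) := by
        gcongr
        exact inv_rpow_add_one_le_rpow_neg m hτ
    _ = max 1 p * ‖τ ^ (r - m)‖ := by
        rw [← rpow_add hτ, ← sub_eq_add_neg, norm_of_nonneg (by positivity)]

lemma integrableOn_Ioi_rpow_mul_add_div_sub_rpow (hp : 0 ≤ p) (hr : -1 < r) (hrm : r + 1 < m) :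
    IntegrableOn (fun τ : ℝ => τ ^ (m * p + r) / (τ ^ m + 1) ^ p - τ ^ r) (Ioi 0) := by
  refine ((integrableOn_Ioi_rpow_div_rpow_add_one hr hrm).const_mul (max 1 p)).mono'
    (by fun_prop) ?_
  filter_upwards [ae_restrict_mem measurableSet_Ioi] with τ hτ
  exact abs_rpow_mul_add_div_sub_rpow_le m r hp hτ

end Scalar

lemma pow_mul_sub_div_eq_rpow_mul_sub_div {m j k : ℕ} (hjk : j ≤ m * k) (p τ : ℝ) :
    τ ^ (m * k - j) / (τ ^ m + 1) ^ p = τ ^ ((m : ℝ) * k - j) / (τ ^ (m : ℝ) + 1) ^ p := by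
  rw [← rpow_natCast τ (m * k - j), Nat.cast_sub hjk, Nat.cast_mul, rpow_natCast τ m]

lemma sum_mul_pow_div_eq_sum_rpow_div_smul {m j : ℕ} (hjm : j ≤ m) (n : ℕ) (c : ℕ → ℂ) (τ : ℝ) :
    ∑ k ∈ Finset.Icc 1 n,
        c k * ((τ ^ (m * k - j) / (τ ^ m + 1) ^ ((k : ℝ) - 1 / 2) : ℝ) : ℂ) =
      ∑ k ∈ Finset.Icc 1 n,
        (τ ^ ((m : ℝ) * k - j) / (τ ^ (m : ℝ) + 1) ^ ((k : ℝ) - 1 / 2)) • c k := by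
  refine Finset.sum_congr rfl fun k hk => ?_
  have hjk : j ≤ m * k := hjm.trans (Nat.le_mul_of_pos_right m (Finset.mem_Icc.1 hk).1)
  rw [pow_mul_sub_div_eq_rpow_mul_sub_div hjk, mul_comm, real_smul]

theorem stmt15_general {ι E : Type*} [NormedAddCommGroup E] [NormedSpace ℝ E] {m j : ℝ}
    (hj : 2 * j < m + 2) (hmj : 2 < m + 2 * j) {s : Finset ι} {k : ι → ℝ}
    (hk : ∀ i ∈ s, 1 / 2 ≤ k i) {c : ι → E} {b : E} (hb : b = ∑ i ∈ s, c i) {g : ℝ → E}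
    (hg : ∀ τ, 0 < τ →
      g τ = ∑ i ∈ s, (τ ^ (m * k i - j) / (τ ^ m + 1) ^ (k i - 1 / 2)) • c i) :
    ((fun τ => g τ - τ ^ (m / 2 - j) • b) =O[atTop] (fun τ : ℝ => τ ^ (-m / 2 - j))) ∧
      IntegrableOn (fun τ => g τ - τ ^ (m / 2 - j) • b) (Ioi 0) := by
  have hp : ∀ i ∈ s, 0 ≤ k i - 1 / 2 := fun i hi => sub_nonneg.2 (hk i hi)
  have hdiff : EqOn (fun τ => ∑ i ∈ s,
      (τ ^ (m * (k i - 1 / 2) + (m / 2 - j)) / (τ ^ m + 1) ^ (k i - 1 / 2) - τ ^ (m / 2 - j)) • c i)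
      (fun τ => g τ - τ ^ (m / 2 - j) • b) (Ioi 0) := fun τ hτ => by
    have hexp (i : ι) : m * (k i - 1 / 2) + (m / 2 - j) = m * k i - j := by ring
    simp only [hexp, hg τ hτ, hb, Finset.smul_sum, ← Finset.sum_sub_distrib, sub_smul]
  constructor
  · rw [show -m / 2 - j = m / 2 - j - m by ring]
    refine IsBigO.congr' (.fun_sum fun i hi => ?_)
      (hdiff.eventuallyEq_of_mem (Ioi_mem_atTop 0)) .rfl
    simpa using (isBigO_rpow_mul_add_div_sub_rpow m (m / 2 - j) (hp i hi)).smul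
      (isBigO_const_const (c i) (one_ne_zero (α := ℝ)) atTop)
  · refine IntegrableOn.congr_fun (integrable_finsetSum s fun i hi => ?_) hdiff measurableSet_Ioi
    exact (integrableOn_Ioi_rpow_mul_add_div_sub_rpow (hp i hi) (by linarith)
      (by linarith)).smul_const (c i)

/-- The function `g(τ) = Σ_{k=1}^j c_k τ^{mk-j}/(τ^m+1)^{k-1/2}` satisfies
`g(τ) - b τ^{m/2-j} = O(τ^{-m/2-j})` as `τ → ∞`, and `g(τ) - b τ^{m/2-j}` is
integrable on `(0,∞)`, where `b = c₁ + ⋯ + c_j`. -/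
theorem stmt15 (m j : ℕ) (hm : 3 ≤ m) (hj1 : 1 ≤ j) (hj2 : 2 * j ≤ m + 1)
    (c : ℕ → ℂ) (b : ℂ) (hbdef : b = ∑ k ∈ Finset.Icc 1 j, c k)
    (g : ℝ → ℂ)
    (hgdef : ∀ τ : ℝ, g τ = ∑ k ∈ Finset.Icc 1 j,
      c k * ((τ ^ (m * k - j) / (τ ^ m + 1) ^ ((k : ℝ) - 1 / 2) : ℝ) : ℂ)) :
    ((fun τ : ℝ => g τ - b * ((τ ^ ((m : ℝ) / 2 - (j : ℝ)) : ℝ) : ℂ))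
      =O[Filter.atTop] (fun τ : ℝ => τ ^ (-(m : ℝ) / 2 - (j : ℝ)))) ∧
    MeasureTheory.IntegrableOn
      (fun τ : ℝ => g τ - b * ((τ ^ ((m : ℝ) / 2 - (j : ℝ)) : ℝ) : ℂ)) (Set.Ioi 0) := by
  simpa only [real_smul, mul_comm] using stmt15_general (by norm_cast; lia) (by norm_cast; lia)
    (fun k hk => one_half_lt_one.le.trans (Nat.one_le_cast.2 (Finset.mem_Icc.1 hk).1)) hbdef
    fun τ _ => (hgdef τ).trans (sum_mul_pow_div_eq_sum_rpow_div_smul (by lia) j c τ)
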